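/- (Homogeneous treatment effects for movers, case D = D1) Under the IV assumptions (Independence, Relevance, Monotonicity, Exclusion), if additionally E[Y(1,1)−Y(0,0); {C1,N2}] = E[Y(1,0)−Y(0,0); {C1,N2}], E[Y(1,1)−Y(0,0); {C1,A2}] = E[Y(1,1)−Y(0,1); {C1,A2}], E[Y(1,1)−Y(0,0); {N1,C2}] = E[Y(1,1)−Y(0,1); {N1,C2}], and E[Y(1,1)−Y(0,0); {A1,C2}] = E[Y(1,0)−Y(0,0); {A1,C2}], then the IV estimand with treatment D1 identifies the full treatment effect for three complier groups: ΔE[Y|Z]/ΔE[D1|Z] = E[Y(1,1)−Y(0,0) | {C1,C2} ∪ {C1,N2} ∪ {C1,A2}] (the conditioning event has positive probability equal to ΔE[D1|Z]). (Corollary 2, first row of Table A) -/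

import Mathlib

open MeasureTheory ProbabilityTheory

noncomputable section

variable {Ω : Type*} [MeasurableSpace Ω]

/-- Observed first-part treatment: `D1 = D1(1)·Z + D1(0)·(1−Z)`. -/
def obsD1 (Z : Ω → ℝ) (D1 : Bool → Ω → ℝ) (ω : Ω) : ℝ :=
  D1 true ω * Z ω + D1 false ω * (1 - Z ω)

/-- Observed second-part treatment. -/
def obsD2 (Z : Ω → ℝ) (D1 : Bool → Ω → ℝ) (D2 : Bool → Bool → Ω → ℝ) (ω : Ω) : ℝ :=
  (D2 true true ω * obsD1 Z D1 ω + D2 true false ω * (1 - obsD1 Z D1 ω)) * Z ω +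
  (D2 false true ω * obsD1 Z D1 ω + D2 false false ω * (1 - obsD1 Z D1 ω)) * (1 - Z ω)

/-- Summary treatment `D∧ = D1·D2`. -/
def obsDand (Z : Ω → ℝ) (D1 : Bool → Ω → ℝ) (D2 : Bool → Bool → Ω → ℝ) (ω : Ω) : ℝ :=
  obsD1 Z D1 ω * obsD2 Z D1 D2 ω

/-- Summary treatment `D∨ = D1 + D2 − D1·D2`. -/
def obsDor (Z : Ω → ℝ) (D1 : Bool → Ω → ℝ) (D2 : Bool → Bool → Ω → ℝ) (ω : Ω) : ℝ :=
  obsD1 Z D1 ω + obsD2 Z D1 D2 ω - obsD1 Z D1 ω * obsD2 Z D1 D2 ω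

/-- Observed outcome `Y = Σ_{d1,d2} Y(Z,d1,d2)·1{D1=d1, D2=d2}`, written out using that the
observed treatments and the instrument are {0,1}-valued. The first index of `Yp` is `z`, the
second is `d1`, the third is `d2`. -/
def obsY (Z : Ω → ℝ) (D1 : Bool → Ω → ℝ) (D2 : Bool → Bool → Ω → ℝ)
    (Yp : Bool → Bool → Bool → Ω → ℝ) (ω : Ω) : ℝ :=
  (Yp true true true ω * obsD1 Z D1 ω * obsD2 Z D1 D2 ω +
   Yp true false true ω * (1 - obsD1 Z D1 ω) * obsD2 Z D1 D2 ω +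
   Yp true true false ω * obsD1 Z D1 ω * (1 - obsD2 Z D1 D2 ω) +
   Yp true false false ω * (1 - obsD1 Z D1 ω) * (1 - obsD2 Z D1 D2 ω)) * Z ω +
  (Yp false true true ω * obsD1 Z D1 ω * obsD2 Z D1 D2 ω +
   Yp false false true ω * (1 - obsD1 Z D1 ω) * obsD2 Z D1 D2 ω +
   Yp false true false ω * obsD1 Z D1 ω * (1 - obsD2 Z D1 D2 ω) +
   Yp false false false ω * (1 - obsD1 Z D1 ω) * (1 - obsD2 Z D1 D2 ω)) * (1 - Z ω)

/-- `ΔE[A|Z] := E[A | Z = 1] − E[A | Z = 0]`, expectations under conditional measures. -/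
def dE (μ : Measure Ω) (Z A : Ω → ℝ) : ℝ :=
  (∫ ω, A ω ∂(μ[|Z ⁻¹' {1}])) - (∫ ω, A ω ∂(μ[|Z ⁻¹' {0}]))

/-- The full-complier event `{C1,C2}`. -/
def CCev (D1 : Bool → Ω → ℝ) (D2 : Bool → Bool → Ω → ℝ) : Set Ω :=
  {ω | D1 true ω - D1 false ω = 1 ∧ D2 true true ω - D2 false false ω = 1}

/-- The mover event `{C1,N2}`. -/
def CNev (D1 : Bool → Ω → ℝ) (D2 : Bool → Bool → Ω → ℝ) : Set Ω :=
  {ω | D1 true ω - D1 false ω = 1 ∧ D2 true true ω = 0 ∧ D2 false false ω = 0}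

/-- The mover event `{C1,A2}`. -/
def CAev (D1 : Bool → Ω → ℝ) (D2 : Bool → Bool → Ω → ℝ) : Set Ω :=
  {ω | D1 true ω - D1 false ω = 1 ∧ D2 true true ω = 1 ∧ D2 false false ω = 1}

/-- The mover event `{N1,C2}`. -/
def NCev (D1 : Bool → Ω → ℝ) (D2 : Bool → Bool → Ω → ℝ) : Set Ω :=
  {ω | D1 true ω = 0 ∧ D1 false ω = 0 ∧ D2 true false ω - D2 false false ω = 1}

/-- The mover event `{A1,C2}`. -/
def ACev (D1 : Bool → Ω → ℝ) (D2 : Bool → Bool → Ω → ℝ) : Set Ω :=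
  {ω | D1 true ω = 1 ∧ D1 false ω = 1 ∧ D2 true true ω - D2 false true ω = 1}

/-!
Independence turns `ΔE[A|Z]` into the unconditional expectation of the difference of the two
potential variables `A(1) − A(0)`. For `D1` this difference is, by monotonicity, the indicator of
`{C1}`, and monotonicity of `D2(z, D1(z))` splits `{C1}` into `{C1,C2}`, `{C1,N2}`, `{C1,A2}`.
For the outcome, `Y(1) − Y(0)` vanishes outside these three groups and `{N1,C2}`, `{A1,C2}`, and on
each group it is the effect of the treatment change that the group experiences. Homogeneity says
that the second treatment alone has zero mean effect on `{N1,C2}` and `{A1,C2}`, and that the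
partial effects on `{C1,N2}` and `{C1,A2}` have the mean of the full effect `Y(1,1) − Y(0,0)`.
-/

section General

variable {μ : Measure Ω} {Z : Ω → ℝ}

lemma identDistrib_cond_of_indepFun {α β : Type*} [MeasurableSpace α] [MeasurableSpace β]
    {X : Ω → α} {W : Ω → β} {s : Set β} (hX : AEMeasurable X μ) (hW : Measurable W)
    (hindep : IndepFun X W μ) (hs : MeasurableSet s) (hs0 : μ (W ⁻¹' s) ≠ 0)
    (hs_top : μ (W ⁻¹' s) ≠ ⊤) :
    IdentDistrib X X (μ[|W ⁻¹' s]) μ := by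
  have hX' : AEMeasurable X (μ[|W ⁻¹' s]) := hX.mono_ac cond_absolutelyContinuous
  refine ⟨hX', hX, ?_⟩
  ext t ht
  rw [Measure.map_apply_of_aemeasurable hX' ht, Measure.map_apply_of_aemeasurable hX ht,
    cond_apply (hW hs), Set.inter_comm, hindep.measure_inter_preimage_eq_mul _ _ ht hs,
    mul_comm, mul_assoc, ENNReal.mul_inv_cancel hs0 hs_top, mul_one]

lemma integral_cond_of_indepFun {β E : Type*} [MeasurableSpace β] [NormedAddCommGroup E]
    [NormedSpace ℝ E] [MeasurableSpace E] [BorelSpace E] {A X : Ω → E} {W : Ω → β} {s : Set β}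
    (hX : AEMeasurable X μ) (hW : Measurable W) (hindep : IndepFun X W μ)
    (hs : MeasurableSet s) (hs0 : μ (W ⁻¹' s) ≠ 0) (hs_top : μ (W ⁻¹' s) ≠ ⊤)
    (hA : ∀ ω, W ω ∈ s → A ω = X ω) :
    ∫ ω, A ω ∂(μ[|W ⁻¹' s]) = ∫ ω, X ω ∂μ :=
  (integral_congr_ae (ae_cond_of_forall_mem (hW hs) hA)).trans
    (identDistrib_cond_of_indepFun hX hW hindep hs hs0 hs_top).integral_eq

lemma dE_eq_integral_sub [IsFiniteMeasure μ] {A : Ω → ℝ} {P : Bool → Ω → ℝ} (hZ : Measurable Z)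
    (hZ1 : μ (Z ⁻¹' {1}) ≠ 0) (hZ0 : μ (Z ⁻¹' {0}) ≠ 0) (hP : ∀ z, Integrable (P z) μ)
    (hindep : ∀ z, IndepFun (P z) Z μ) (hA1 : ∀ ω, Z ω = 1 → A ω = P true ω)
    (hA0 : ∀ ω, Z ω = 0 → A ω = P false ω) :
    dE μ Z A = ∫ ω, (P true ω - P false ω) ∂μ := by
  rw [dE, integral_sub (hP true) (hP false),
    integral_cond_of_indepFun (hP true).aemeasurable hZ (hindep true) (measurableSet_singleton 1)
      hZ1 (measure_ne_top _ _) hA1,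
    integral_cond_of_indepFun (hP false).aemeasurable hZ (hindep false) (measurableSet_singleton 0)
      hZ0 (measure_ne_top _ _) hA0]

lemma measure_preimage_zero_ne_zero [IsProbabilityMeasure μ] (hZ : Measurable Z)
    (hZ01 : ∀ ω, Z ω = 0 ∨ Z ω = 1) (hZ1 : μ (Z ⁻¹' {1}) ≠ 1) : μ (Z ⁻¹' {0}) ≠ 0 := by
  have hcompl : Z ⁻¹' {0} = (Z ⁻¹' {1})ᶜ := by
    ext ω
    rcases hZ01 ω with h | h <;> simp [h]
  rwa [hcompl, ne_eq, prob_compl_eq_zero_iff (hZ (measurableSet_singleton 1))]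

lemma integrable_mul_of_zero_or_one {f d : Ω → ℝ} (hf : Integrable f μ)
    (hd : AEStronglyMeasurable d μ) (hd01 : ∀ ω, d ω = 0 ∨ d ω = 1) :
    Integrable (fun ω => f ω * d ω) μ :=
  hf.mul_bdd (c := 1) hd <| .of_forall fun ω => by rcases hd01 ω with h | h <;> simp [h]

end General

/-- The potential second treatment `D2(z) = D2(z, D1(z))` under the instrument value `z`, with the
choice of the second argument written as an affine combination in the `{0,1}`-valued `D1(z)`. -/
def potD2 (D1 : Bool → Ω → ℝ) (D2 : Bool → Bool → Ω → ℝ) (z : Bool) (ω : Ω) : ℝ :=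
  D2 z true ω * D1 z ω + D2 z false ω * (1 - D1 z ω)

/-- The potential outcome `Y(z) = Y(z, D1(z), D2(z))` under the instrument value `z`, the cell
`{D1(z) = d1, D2(z) = d2}` being selected by a product of `{0,1}`-valued weights. -/
def potY (D1 : Bool → Ω → ℝ) (D2 : Bool → Bool → Ω → ℝ) (Yp : Bool → Bool → Bool → Ω → ℝ)
    (z : Bool) (ω : Ω) : ℝ :=
  Yp z true true ω * D1 z ω * potD2 D1 D2 z ω +
  Yp z false true ω * (1 - D1 z ω) * potD2 D1 D2 z ω +
  Yp z true false ω * D1 z ω * (1 - potD2 D1 D2 z ω) +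
  Yp z false false ω * (1 - D1 z ω) * (1 - potD2 D1 D2 z ω)

/-- The event `{C1}` that the first treatment complies with the instrument. -/
def C1ev (D1 : Bool → Ω → ℝ) : Set Ω :=
  {ω | D1 true ω - D1 false ω = 1}

/-- The space of values of the vector of all `D1(z)`, `D2(z,d1)` and `Y(z,d1,d2)`. -/
abbrev PotentialValues : Type :=
  (Bool → ℝ) × (Bool → Bool → ℝ) × (Bool → Bool → Bool → ℝ)

/-- The random vector of all potential treatments and outcomes, whose joint independence of the
instrument is the Independence assumption. -/
def potentialVector (D1 : Bool → Ω → ℝ) (D2 : Bool → Bool → Ω → ℝ)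
    (Yp : Bool → Bool → Bool → Ω → ℝ) (ω : Ω) : PotentialValues :=
  (fun b => D1 b ω, fun b b' => D2 b b' ω, fun z d1 d2 => Yp z d1 d2 ω)

section ResponseTypes

lemma never_or_complier_or_always {d₀ d₁ : ℝ} (h₀ : d₀ = 0 ∨ d₀ = 1) (h₁ : d₁ = 0 ∨ d₁ = 1)
    (hle : d₀ ≤ d₁) : (d₀ = 0 ∧ d₁ = 0) ∨ (d₀ = 0 ∧ d₁ = 1) ∨ (d₀ = 1 ∧ d₁ = 1) := by
  rcases h₀ with rfl | rfl <;> rcases h₁ with rfl | rfl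
  · simp
  · simp
  · linarith
  · simp

variable {α : Type*} {D1 : Bool → α → ℝ} {D2 : Bool → Bool → α → ℝ}
  {Yp : Bool → Bool → Bool → α → ℝ}

lemma potD2_eq_zero_or_one (hD1 : ∀ b ω, D1 b ω = 0 ∨ D1 b ω = 1)
    (hD2 : ∀ b b' ω, D2 b b' ω = 0 ∨ D2 b b' ω = 1) (z : Bool) (ω : α) :
    potD2 D1 D2 z ω = 0 ∨ potD2 D1 D2 z ω = 1 := by
  rcases hD1 z ω with h | h <;> simp [potD2, h, hD2]

lemma mem_C1ev_iff (hD1 : ∀ b ω, D1 b ω = 0 ∨ D1 b ω = 1) {ω : α} :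
    ω ∈ C1ev D1 ↔ D1 true ω = 1 ∧ D1 false ω = 0 := by
  rcases hD1 true ω with h1 | h1 <;> rcases hD1 false ω with h0 | h0 <;>
    norm_num [C1ev, h1, h0]

lemma potY_sub_eq_sum_indicator (hD1 : ∀ b ω, D1 b ω = 0 ∨ D1 b ω = 1)
    (hD2 : ∀ b b' ω, D2 b b' ω = 0 ∨ D2 b b' ω = 1) {ω : α} (hmono1 : D1 false ω ≤ D1 true ω)
    (hmono2 : potD2 D1 D2 false ω ≤ potD2 D1 D2 true ω)
    (hexcl : ∀ d1 d2, Yp true d1 d2 ω = Yp false d1 d2 ω) :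
    potY D1 D2 Yp true ω - potY D1 D2 Yp false ω =
      (CCev D1 D2).indicator (fun ω => Yp true true true ω - Yp true false false ω) ω +
      (CNev D1 D2).indicator (fun ω => Yp true true false ω - Yp true false false ω) ω +
      (CAev D1 D2).indicator (fun ω => Yp true true true ω - Yp true false true ω) ω +
      (NCev D1 D2).indicator (fun ω => Yp true false true ω - Yp true false false ω) ω +
      (ACev D1 D2).indicator (fun ω => Yp true true true ω - Yp true true false ω) ω := by
  simp only [Set.indicator_apply, CCev, CNev, CAev, NCev, ACev, Set.mem_ofPred_eq, potY, hexcl]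
  rcases never_or_complier_or_always (hD1 false ω) (hD1 true ω) hmono1 with
    ⟨h0, h1⟩ | ⟨h0, h1⟩ | ⟨h0, h1⟩ <;>
    simp only [potD2, h0, h1, mul_zero, mul_one, sub_zero, sub_self, zero_add, add_zero]
      at hmono2 ⊢
  · rcases never_or_complier_or_always (hD2 false false ω) (hD2 true false ω) hmono2 with
      ⟨h00, h10⟩ | ⟨h00, h10⟩ | ⟨h00, h10⟩ <;> simp [h00, h10]
  · rcases never_or_complier_or_always (hD2 false false ω) (hD2 true true ω) hmono2 with
      ⟨h00, h11⟩ | ⟨h00, h11⟩ | ⟨h00, h11⟩ <;> simp [h00, h11]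
  · rcases never_or_complier_or_always (hD2 false true ω) (hD2 true true ω) hmono2 with
      ⟨h01, h11⟩ | ⟨h01, h11⟩ | ⟨h01, h11⟩ <;> simp [h01, h11]

end ResponseTypes

section PotentialVariables

variable {μ : Measure Ω} {Z : Ω → ℝ} {D1 : Bool → Ω → ℝ} {D2 : Bool → Bool → Ω → ℝ}
  {Yp : Bool → Bool → Bool → Ω → ℝ}

lemma measurable_potD2 (hD1 : ∀ b, Measurable (D1 b)) (hD2 : ∀ b b', Measurable (D2 b b'))
    (z : Bool) : Measurable (potD2 D1 D2 z) := by
  unfold potD2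
  fun_prop

lemma measurable_potY (hD1 : ∀ b, Measurable (D1 b)) (hD2 : ∀ b b', Measurable (D2 b b'))
    (hY : ∀ z d1 d2, Measurable (Yp z d1 d2)) (z : Bool) : Measurable (potY D1 D2 Yp z) := by
  unfold potY potD2
  fun_prop

lemma integrable_potY (hD1meas : ∀ b, Measurable (D1 b)) (hD2meas : ∀ b b', Measurable (D2 b b'))
    (hY : ∀ z d1 d2, Integrable (Yp z d1 d2) μ) (hD1 : ∀ b ω, D1 b ω = 0 ∨ D1 b ω = 1)
    (hD2 : ∀ b b' ω, D2 b b' ω = 0 ∨ D2 b b' ω = 1) (z : Bool) :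
    Integrable (potY D1 D2 Yp z) μ := by
  have integrable_mul_mul {f a b : Ω → ℝ} (hf : Integrable f μ) (ha : Measurable a)
      (hb : Measurable b) (ha01 : ∀ ω, a ω = 0 ∨ a ω = 1) (hb01 : ∀ ω, b ω = 0 ∨ b ω = 1) :
      Integrable (fun ω => f ω * a ω * b ω) μ :=
    integrable_mul_of_zero_or_one
      (integrable_mul_of_zero_or_one hf ha.aestronglyMeasurable ha01) hb.aestronglyMeasurable hb01
  have one_sub_eq_zero_or_one {d : Ω → ℝ} (hd : ∀ ω, d ω = 0 ∨ d ω = 1) (ω : Ω) :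
      1 - d ω = 0 ∨ 1 - d ω = 1 := by
    rcases hd ω with h | h <;> simp [h]
  have hd1 := hD1meas z
  have hd2 := measurable_potD2 hD1meas hD2meas z
  have hd1_01 := hD1 z
  have hd2_01 := potD2_eq_zero_or_one hD1 hD2 z
  have hd1_01' := one_sub_eq_zero_or_one hd1_01
  have hd2_01' := one_sub_eq_zero_or_one hd2_01
  exact (((integrable_mul_mul (hY z true true) hd1 hd2 hd1_01 hd2_01).add
    (integrable_mul_mul (hY z false true) (hd1.const_sub 1) hd2 hd1_01' hd2_01)).add
    (integrable_mul_mul (hY z true false) hd1 (hd2.const_sub 1) hd1_01 hd2_01')).add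
    (integrable_mul_mul (hY z false false) (hd1.const_sub 1) (hd2.const_sub 1) hd1_01' hd2_01')

lemma indepFun_D1 (hindep : IndepFun (potentialVector D1 D2 Yp) Z μ) (z : Bool) :
    IndepFun (D1 z) Z μ :=
  hindep.comp (φ := fun v : PotentialValues => v.1 z) (by fun_prop) measurable_id

lemma indepFun_potY (hindep : IndepFun (potentialVector D1 D2 Yp) Z μ) (z : Bool) :
    IndepFun (potY D1 D2 Yp z) Z μ :=
  -- `φ` is `potY` itself, for the coordinate functions on `PotentialValues`.
  hindep.comp (φ := potY (Ω := PotentialValues) (fun b v => v.1 b) (fun b b' v => v.2.1 b b')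
    (fun z d1 d2 v => v.2.2 z d1 d2) z)
    (measurable_potY (by fun_prop) (by fun_prop) (by fun_prop) z) measurable_id

lemma dE_obsD1_eq_integral [IsFiniteMeasure μ] (hZ : Measurable Z) (hZ1 : μ (Z ⁻¹' {1}) ≠ 0)
    (hZ0 : μ (Z ⁻¹' {0}) ≠ 0) (hD1int : ∀ b, Integrable (D1 b) μ)
    (hindep : ∀ b, IndepFun (D1 b) Z μ) :
    dE μ Z (obsD1 Z D1) = ∫ ω, (D1 true ω - D1 false ω) ∂μ :=
  dE_eq_integral_sub hZ hZ1 hZ0 hD1int hindep (fun ω h => by simp [obsD1, h])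
    (fun ω h => by simp [obsD1, h])

lemma dE_obsY_eq_integral [IsFiniteMeasure μ] (hZ : Measurable Z) (hZ1 : μ (Z ⁻¹' {1}) ≠ 0)
    (hZ0 : μ (Z ⁻¹' {0}) ≠ 0) (hYint : ∀ z, Integrable (potY D1 D2 Yp z) μ)
    (hindep : ∀ z, IndepFun (potY D1 D2 Yp z) Z μ) :
    dE μ Z (obsY Z D1 D2 Yp) = ∫ ω, (potY D1 D2 Yp true ω - potY D1 D2 Yp false ω) ∂μ :=
  dE_eq_integral_sub hZ hZ1 hZ0 hYint hindep
    (fun ω h => by simp [obsY, obsD2, obsD1, potY, potD2, h])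
    (fun ω h => by simp [obsY, obsD2, obsD1, potY, potD2, h])

end PotentialVariables

section Compliers

variable {μ : Measure Ω} {D1 : Bool → Ω → ℝ} {D2 : Bool → Bool → Ω → ℝ}
  {Yp : Bool → Bool → Bool → Ω → ℝ}

lemma integral_D1_sub_eq_measureReal_C1ev (hD1meas : ∀ b, Measurable (D1 b))
    (hD1 : ∀ b ω, D1 b ω = 0 ∨ D1 b ω = 1) (hmono1 : D1 false ≤ᵐ[μ] D1 true) :
    ∫ ω, (D1 true ω - D1 false ω) ∂μ = μ.real (C1ev D1) := by
  have hmeas : MeasurableSet (C1ev D1) := by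
    unfold C1ev
    measurability
  rw [← integral_indicator_one hmeas]
  refine integral_congr_ae ?_
  filter_upwards [hmono1] with ω hle
  rcases never_or_complier_or_always (hD1 false ω) (hD1 true ω) hle with
    ⟨h0, h1⟩ | ⟨h0, h1⟩ | ⟨h0, h1⟩ <;> simp [C1ev, h0, h1]

lemma CCev_union_CNev_union_CAev_ae_eq (hD1 : ∀ b ω, D1 b ω = 0 ∨ D1 b ω = 1)
    (hD2 : ∀ b b' ω, D2 b b' ω = 0 ∨ D2 b b' ω = 1)
    (hmono2 : potD2 D1 D2 false ≤ᵐ[μ] potD2 D1 D2 true) :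
    (CCev D1 D2 ∪ CNev D1 D2 ∪ CAev D1 D2 : Set Ω) =ᵐ[μ] C1ev D1 := by
  refine Filter.Eventually.set_eq ?_
  filter_upwards [hmono2] with ω hle
  refine ⟨by rintro ((h | h) | h) <;> exact h.1, fun hω => ?_⟩
  obtain ⟨h1, h0⟩ := (mem_C1ev_iff hD1).1 hω
  have hle' : D2 false false ω ≤ D2 true true ω := by simpa [potD2, h1, h0] using hle
  rcases never_or_complier_or_always (hD2 false false ω) (hD2 true true ω) hle' with
    ⟨h00, h11⟩ | ⟨h00, h11⟩ | ⟨h00, h11⟩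
  · exact .inl (.inr ⟨hω, h11, h00⟩)
  · exact .inl (.inl ⟨hω, by rw [h11, h00, sub_zero]⟩)
  · exact .inr ⟨hω, h11, h00⟩

lemma measurableSet_CCev (hD1 : ∀ b, Measurable (D1 b)) (hD2 : ∀ b b', Measurable (D2 b b')) :
    MeasurableSet (CCev D1 D2) := by
  unfold CCev
  measurability

lemma measurableSet_CNev (hD1 : ∀ b, Measurable (D1 b)) (hD2 : ∀ b b', Measurable (D2 b b')) :
    MeasurableSet (CNev D1 D2) := by
  unfold CNev
  measurability

lemma measurableSet_CAev (hD1 : ∀ b, Measurable (D1 b)) (hD2 : ∀ b b', Measurable (D2 b b')) :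
    MeasurableSet (CAev D1 D2) := by
  unfold CAev
  measurability

lemma measurableSet_NCev (hD1 : ∀ b, Measurable (D1 b)) (hD2 : ∀ b b', Measurable (D2 b b')) :
    MeasurableSet (NCev D1 D2) := by
  unfold NCev
  measurability

lemma measurableSet_ACev (hD1 : ∀ b, Measurable (D1 b)) (hD2 : ∀ b b', Measurable (D2 b b')) :
    MeasurableSet (ACev D1 D2) := by
  unfold ACev
  measurability

lemma integral_potY_sub_eq_sum_setIntegral (hD1meas : ∀ b, Measurable (D1 b))
    (hD2meas : ∀ b b', Measurable (D2 b b')) (hY : ∀ d1 d2, Integrable (Yp true d1 d2) μ)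
    (hD1 : ∀ b ω, D1 b ω = 0 ∨ D1 b ω = 1) (hD2 : ∀ b b' ω, D2 b b' ω = 0 ∨ D2 b b' ω = 1)
    (hmono1 : D1 false ≤ᵐ[μ] D1 true) (hmono2 : potD2 D1 D2 false ≤ᵐ[μ] potD2 D1 D2 true)
    (hexcl : ∀ d1 d2, Yp true d1 d2 =ᵐ[μ] Yp false d1 d2) :
    ∫ ω, (potY D1 D2 Yp true ω - potY D1 D2 Yp false ω) ∂μ =
      (∫ ω in CCev D1 D2, (Yp true true true ω - Yp true false false ω) ∂μ) +
      (∫ ω in CNev D1 D2, (Yp true true false ω - Yp true false false ω) ∂μ) +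
      (∫ ω in CAev D1 D2, (Yp true true true ω - Yp true false true ω) ∂μ) +
      (∫ ω in NCev D1 D2, (Yp true false true ω - Yp true false false ω) ∂μ) +
      (∫ ω in ACev D1 D2, (Yp true true true ω - Yp true true false ω) ∂μ) := by
  have hCC := measurableSet_CCev hD1meas hD2meas
  have hCN := measurableSet_CNev hD1meas hD2meas
  have hCA := measurableSet_CAev hD1meas hD2meas
  have hNC := measurableSet_NCev hD1meas hD2meas
  have hAC := measurableSet_ACev hD1meas hD2meas
  have hexcl' : ∀ᵐ ω ∂μ, ∀ d1 d2, Yp true d1 d2 ω = Yp false d1 d2 ω := by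
    simpa only [ae_all_iff, Filter.EventuallyEq] using hexcl
  rw [← integral_indicator hCC, ← integral_indicator hCN, ← integral_indicator hCA,
    ← integral_indicator hNC, ← integral_indicator hAC, ← integral_add, ← integral_add,
    ← integral_add, ← integral_add]
  · refine integral_congr_ae ?_
    filter_upwards [hmono1, hmono2, hexcl'] with ω h1 h2 hexclω
    exact potY_sub_eq_sum_indicator hD1 hD2 h1 h2 hexclω
  all_goals fun_prop (disch := assumption)

lemma setIntegral_CCev_union_CNev_union_CAev {E : Type*} [NormedAddCommGroup E] [NormedSpace ℝ E]
    (hD1 : ∀ b, Measurable (D1 b)) (hD2 : ∀ b b', Measurable (D2 b b')) {f : Ω → E}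
    (hf : Integrable f μ) :
    ∫ ω in CCev D1 D2 ∪ CNev D1 D2 ∪ CAev D1 D2, f ω ∂μ =
      (∫ ω in CCev D1 D2, f ω ∂μ) + (∫ ω in CNev D1 D2, f ω ∂μ) + ∫ ω in CAev D1 D2, f ω ∂μ := by
  have hdisj_CN : Disjoint (CCev D1 D2) (CNev D1 D2) := by
    refine Set.disjoint_left.2 ?_
    rintro ω ⟨-, hC2⟩ ⟨-, h11, h00⟩
    norm_num [h11, h00] at hC2
  have hdisj_CA : Disjoint (CCev D1 D2 ∪ CNev D1 D2) (CAev D1 D2) := by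
    refine Set.disjoint_left.2 ?_
    rintro ω (⟨-, hC2⟩ | ⟨-, h11', -⟩) ⟨-, h11, h00⟩
    · norm_num [h11, h00] at hC2
    · norm_num [h11] at h11'
  rw [setIntegral_union hdisj_CA (measurableSet_CAev hD1 hD2) hf.integrableOn hf.integrableOn,
    setIntegral_union hdisj_CN (measurableSet_CNev hD1 hD2) hf.integrableOn hf.integrableOn]

lemma integral_potY_sub_eq_setIntegral_of_homogeneous (hD1meas : ∀ b, Measurable (D1 b))
    (hD2meas : ∀ b b', Measurable (D2 b b')) (hY : ∀ d1 d2, Integrable (Yp true d1 d2) μ)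
    (hD1 : ∀ b ω, D1 b ω = 0 ∨ D1 b ω = 1) (hD2 : ∀ b b' ω, D2 b b' ω = 0 ∨ D2 b b' ω = 1)
    (hmono1 : D1 false ≤ᵐ[μ] D1 true) (hmono2 : potD2 D1 D2 false ≤ᵐ[μ] potD2 D1 D2 true)
    (hexcl : ∀ d1 d2, Yp true d1 d2 =ᵐ[μ] Yp false d1 d2)
    (homCN : ∫ ω in CNev D1 D2, (Yp true true true ω - Yp true false false ω) ∂μ =
      ∫ ω in CNev D1 D2, (Yp true true false ω - Yp true false false ω) ∂μ)
    (homCA : ∫ ω in CAev D1 D2, (Yp true true true ω - Yp true false false ω) ∂μ =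
      ∫ ω in CAev D1 D2, (Yp true true true ω - Yp true false true ω) ∂μ)
    (homNC : ∫ ω in NCev D1 D2, (Yp true true true ω - Yp true false false ω) ∂μ =
      ∫ ω in NCev D1 D2, (Yp true true true ω - Yp true false true ω) ∂μ)
    (homAC : ∫ ω in ACev D1 D2, (Yp true true true ω - Yp true false false ω) ∂μ =
      ∫ ω in ACev D1 D2, (Yp true true false ω - Yp true false false ω) ∂μ) :
    ∫ ω, (potY D1 D2 Yp true ω - potY D1 D2 Yp false ω) ∂μ =
      ∫ ω in CCev D1 D2 ∪ CNev D1 D2 ∪ CAev D1 D2,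
        (Yp true true true ω - Yp true false false ω) ∂μ := by
  have setIntegral_sub (s : Set Ω) (i j k l : Bool) :
      ∫ ω in s, (Yp true i j ω - Yp true k l ω) ∂μ =
        (∫ ω in s, Yp true i j ω ∂μ) - ∫ ω in s, Yp true k l ω ∂μ :=
    integral_sub (hY i j).integrableOn (hY k l).integrableOn
  have hNC_zero : ∫ ω in NCev D1 D2, (Yp true false true ω - Yp true false false ω) ∂μ = 0 := by
    simp only [setIntegral_sub] at homNC ⊢
    linarith
  have hAC_zero : ∫ ω in ACev D1 D2, (Yp true true true ω - Yp true true false ω) ∂μ = 0 := by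
    simp only [setIntegral_sub] at homAC ⊢
    linarith
  rw [integral_potY_sub_eq_sum_setIntegral hD1meas hD2meas hY hD1 hD2 hmono1 hmono2 hexcl,
    hNC_zero, hAC_zero, add_zero, add_zero, ← homCN, ← homCA,
    setIntegral_CCev_union_CNev_union_CAev hD1meas hD2meas
      (f := fun ω => Yp true true true ω - Yp true false false ω) (by fun_prop)]

end Compliers

theorem stmt_6
    (μ : Measure Ω) [IsProbabilityMeasure μ]
    (Z : Ω → ℝ) (D1 : Bool → Ω → ℝ) (D2 : Bool → Bool → Ω → ℝ)
    (Yp : Bool → Bool → Bool → Ω → ℝ)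
    (hZmeas : Measurable Z)
    (hD1meas : ∀ b, Measurable (D1 b))
    (hD2meas : ∀ b b', Measurable (D2 b b'))
    (hYmeas : ∀ z d1 d2, Measurable (Yp z d1 d2))
    (hYint : ∀ z d1 d2, Integrable (Yp z d1 d2) μ)
    (hZ01 : ∀ ω, Z ω = 0 ∨ Z ω = 1)
    (hZpos : 0 < μ (Z ⁻¹' {1})) (hZlt : μ (Z ⁻¹' {1}) < 1)
    (hD101 : ∀ b ω, D1 b ω = 0 ∨ D1 b ω = 1)
    (hD201 : ∀ b b' ω, D2 b b' ω = 0 ∨ D2 b b' ω = 1)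
    (hindep : IndepFun
      (fun ω => ((fun b => D1 b ω), (fun b b' => D2 b b' ω), (fun z d1 d2 => Yp z d1 d2 ω))) Z μ)
    (hrel1 : 0 < dE μ Z (obsD1 Z D1))
    (hrel2 : 0 < dE μ Z (obsD2 Z D1 D2))
    (hrelAnd : 0 < dE μ Z (obsDand Z D1 D2))
    (hrelOr : 0 < dE μ Z (obsDor Z D1 D2))
    (hmono1 : ∀ᵐ ω ∂μ, D1 false ω ≤ D1 true ω)
    (hmono2 : ∀ᵐ ω ∂μ,
      D2 false true ω * D1 false ω + D2 false false ω * (1 - D1 false ω) ≤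
        D2 true true ω * D1 true ω + D2 true false ω * (1 - D1 true ω))
    (hexcl : ∀ d1 d2, ∀ᵐ ω ∂μ, Yp true d1 d2 ω = Yp false d1 d2 ω)
    (hom1 : ∫ ω in CNev D1 D2, (Yp true true true ω - Yp true false false ω) ∂μ =
      ∫ ω in CNev D1 D2, (Yp true true false ω - Yp true false false ω) ∂μ)
    (hom2 : ∫ ω in CAev D1 D2, (Yp true true true ω - Yp true false false ω) ∂μ =
      ∫ ω in CAev D1 D2, (Yp true true true ω - Yp true false true ω) ∂μ)
    (hom3 : ∫ ω in NCev D1 D2, (Yp true true true ω - Yp true false false ω) ∂μ =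
      ∫ ω in NCev D1 D2, (Yp true true true ω - Yp true false true ω) ∂μ)
    (hom4 : ∫ ω in ACev D1 D2, (Yp true true true ω - Yp true false false ω) ∂μ =
      ∫ ω in ACev D1 D2, (Yp true true false ω - Yp true false false ω) ∂μ) :
    0 < μ (CCev D1 D2 ∪ CNev D1 D2 ∪ CAev D1 D2) ∧
    (μ (CCev D1 D2 ∪ CNev D1 D2 ∪ CAev D1 D2)).toReal = dE μ Z (obsD1 Z D1) ∧
    dE μ Z (obsY Z D1 D2 Yp) / dE μ Z (obsD1 Z D1) =
      (∫ ω in CCev D1 D2 ∪ CNev D1 D2 ∪ CAev D1 D2, (Yp true true true ω - Yp true false false ω) ∂μ) /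
        (μ (CCev D1 D2 ∪ CNev D1 D2 ∪ CAev D1 D2)).toReal := by
  have hZ0 := measure_preimage_zero_ne_zero hZmeas hZ01 hZlt.ne
  have hD1int (b : Bool) : Integrable (D1 b) μ := by
    simpa using integrable_mul_of_zero_or_one (integrable_const 1)
      (hD1meas b).aestronglyMeasurable (hD101 b)
  have hdenominator : μ.real (CCev D1 D2 ∪ CNev D1 D2 ∪ CAev D1 D2) = dE μ Z (obsD1 Z D1) := by
    rw [measureReal_congr (CCev_union_CNev_union_CAev_ae_eq hD101 hD201 hmono2),
      dE_obsD1_eq_integral hZmeas hZpos.ne' hZ0 hD1int (indepFun_D1 hindep),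
      integral_D1_sub_eq_measureReal_C1ev hD1meas hD101 hmono1]
  have hnumerator : dE μ Z (obsY Z D1 D2 Yp) = ∫ ω in CCev D1 D2 ∪ CNev D1 D2 ∪ CAev D1 D2,
      (Yp true true true ω - Yp true false false ω) ∂μ := by
    rw [dE_obsY_eq_integral hZmeas hZpos.ne' hZ0
        (integrable_potY hD1meas hD2meas hYint hD101 hD201) (indepFun_potY hindep),
      integral_potY_sub_eq_setIntegral_of_homogeneous hD1meas hD2meas (hYint true) hD101
        hD201 hmono1 hmono2 hexcl hom1 hom2 hom3 hom4]
  refine ⟨?_, hdenominator, by rw [hnumerator, ← hdenominator, measureReal_def]⟩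
  exact (ENNReal.toReal_pos_iff.1 (hrel1.trans_eq hdenominator.symm)).1
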